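/- Let n, m ≥ 1, p > 1, and let u = (u_1,…,u_m) be an m-tuple of C² functions u_i : ℝⁿ → ℝ solving the p-Laplacian system −div(|∇u_i|^{p−2}∇u_i) = H_i(u) on ℝⁿ for every i. Write x = (x', x_n) ∈ ℝ^{n−1} × ℝ. Assume: (i) for every x_n the function x' ↦ ∑_{i=1}^m |∇u_i|^{p−2}[ (1/p)|∇_{x'}u_i|² − ((p−1)/p)|∂_{x_n}u_i|² ] − H̃(u) is integrable over ℝ^{n−1}, so that its integral G(x_n) (as a limit over balls B_R(0) ⊂ ℝ^{n−1}) exists and is finite; (ii) differentiation under the integral sign in x_n is justified for each truncated integral over B_R(0); and (iii) for every x_n there is a sequence R_k → ∞ along which ∫_0^{x_n} ∫_{∂B_{R_k}(0)⊂ℝ^{n−1}} ∑_{i=1}^m |∇u_i|^{p−2}(∂_{ν_{x'}}u_i)(∂_{x_n}u_i) dS(x') dt → 0. Then G(x_n) is constant in x_n: ∫_{ℝ^{n−1}} ( ∑_{i=1}^m |∇u_i|^{p−2}[ (1/p)|∇_{x'}u_i|² − ((p−1)/p)|∂_{x_n}u_i|² ] − H̃(u) ) dx' ≡ C. -/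

import Mathlib

open MeasureTheory Metric Finset Filter
open scoped RealInnerProductSpace

noncomputable section

/-- Divergence of a vector field on Euclidean space. -/
def vdiv {N : ℕ} (F : EuclideanSpace ℝ (Fin N) → EuclideanSpace ℝ (Fin N))
    (x : EuclideanSpace ℝ (Fin N)) : ℝ :=
  ∑ i, fderiv ℝ F x (EuclideanSpace.single i 1) i

/-- The point `(x', t) ∈ ℝ^{n} × ℝ = ℝ^{n+1}`. -/
def emb {n : ℕ} (x' : EuclideanSpace ℝ (Fin n)) (t : ℝ) : EuclideanSpace ℝ (Fin (n + 1)) :=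
  (EuclideanSpace.equiv (Fin (n + 1)) ℝ).symm (Fin.snoc (fun j => x' j) t)

/-- The integrand of the Hamiltonian for the p-Laplacian system:
`∑ᵢ |∇uᵢ|^{p-2}[ (1/p)|∇_{x'}uᵢ|² - ((p-1)/p)|∂_{x_n}uᵢ|² ] - H̃(u)` at `(x', t)`. -/
def pIntegrand {n m : ℕ} (p : ℝ) (Ht : (Fin m → ℝ) → ℝ)
    (u : Fin m → EuclideanSpace ℝ (Fin (n + 1)) → ℝ)
    (x' : EuclideanSpace ℝ (Fin n)) (t : ℝ) : ℝ :=
  (∑ i, ‖gradient (u i) (emb x' t)‖ ^ (p - 2)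
      * (1 / p * ‖gradient (fun y => u i (emb y t)) x'‖ ^ 2
        - (p - 1) / p
          * (fderiv ℝ (u i) (emb x' t) (EuclideanSpace.single (Fin.last n) 1)) ^ 2))
    - Ht (fun j => u j (emb x' t))

abbrev Eu (n : ℕ) := EuclideanSpace ℝ (Fin n)

lemma polar_aux (k : ℕ) (F : Eu (k+1) → ℝ) (hF : Integrable F) :
    ∫ x, F x = ∫ r in Set.Ioi (0:ℝ), r ^ k *
      ∫ ω : sphere (0 : Eu (k+1)) 1, F (r • (ω : Eu (k+1)))
        ∂(volume : Measure (Eu (k+1))).toSphere := by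
  set μ : Measure (Eu (k+1)) := volume
  have hd : Module.finrank ℝ (Eu (k+1)) = k + 1 := by simp
  have hmp := μ.measurePreserving_homeomorphUnitSphereProd
  have hemb := (homeomorphUnitSphereProd (Eu (k+1))).measurableEmbedding
  rw [hd, Nat.add_sub_cancel] at hmp
  set G : sphere (0 : Eu (k+1)) 1 × Set.Ioi (0:ℝ) → ℝ := fun z => F ((z.2 : ℝ) • (z.1 : Eu (k+1))) with hG
  have hGF : ∀ x : ({(0 : Eu (k+1))}ᶜ : Set (Eu (k+1))), G (homeomorphUnitSphereProd (Eu (k+1)) x) = F x := by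
    intro x
    have hx : ‖(x: Eu (k+1))‖ ≠ 0 := by exact norm_ne_zero_iff.2 x.2
    simp [hG, homeomorphUnitSphereProd, smul_smul, hx]
  have hint : Integrable (fun x : ({(0 : Eu (k+1))}ᶜ : Set (Eu (k+1))) => F x) (μ.comap (↑)) := by
    have := hF.integrableOn (s := ({(0 : Eu (k+1))}ᶜ : Set (Eu (k+1))))
    rwa [integrableOn_iff_comap_subtypeVal (measurableSet_singleton _).compl] at this
  have hGi : Integrable G (μ.toSphere.prod (.volumeIoiPow k)) := by
    rw [← hmp.integrable_comp_emb hemb]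
    refine hint.congr (.of_forall fun x => (hGF x).symm)
  calc ∫ x, F x ∂μ = ∫ x : ({(0 : Eu (k+1))}ᶜ : Set (Eu (k+1))), F x ∂(μ.comap (↑)) := by
        rw [integral_subtype_comap (measurableSet_singleton _).compl F, restrict_compl_singleton]
    _ = ∫ z, G z ∂(μ.toSphere.prod (.volumeIoiPow k)) := by
        rw [← hmp.integral_comp hemb]
        exact integral_congr_ae (.of_forall fun x => (hGF x).symm)
    _ = ∫ r, ∫ ω, G (ω, r) ∂μ.toSphere ∂(Measure.volumeIoiPow k) := integral_prod_symm _ hGi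
    _ = _ := by
      simp only [Measure.volumeIoiPow, ENNReal.ofReal]
      rw [integral_withDensity_eq_integral_smul,
        integral_subtype_comap measurableSet_Ioi fun a ↦ Real.toNNReal (a ^ k) • ∫ ω, F (a • (ω : Eu (k+1))) ∂μ.toSphere,
        setIntegral_congr_fun measurableSet_Ioi fun x hx ↦ ?_]
      · rw [NNReal.smul_def, Real.coe_toNNReal _ (pow_nonneg hx.out.le _)]; rfl
      · exact (measurable_subtype_coe.pow_const _).real_toNNReal


lemma polar_ball (k : ℕ) (F : Eu (k+1) → ℝ) (hF : Continuous F) (R : ℝ) (hR : 0 < R) :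
    ∫ x in ball (0 : Eu (k+1)) R, F x = ∫ r in (0:ℝ)..R, r ^ k *
      ∫ ω : sphere (0 : Eu (k+1)) 1, F (r • (ω : Eu (k+1)))
        ∂(volume : Measure (Eu (k+1))).toSphere := by
  have hI : IntegrableOn F (ball (0 : Eu (k+1)) R) :=
    (hF.continuousOn.integrableOn_compact (isCompact_closedBall (0 : Eu (k+1)) R)).mono_set
      ball_subset_closedBall
  rw [← integral_indicator measurableSet_ball, polar_aux k _
    ((integrable_indicator_iff measurableSet_ball).2 hI),
    intervalIntegral.integral_of_le hR.le, integral_Ioc_eq_integral_Ioo]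
  have : Set.Ioo (0:ℝ) R = Set.Ioi 0 ∩ Set.Iio R := by ext; simp
  rw [this, ← setIntegral_indicator measurableSet_Iio]
  refine setIntegral_congr_fun measurableSet_Ioi fun r hr => ?_
  have hr' : (0:ℝ) < r := hr
  by_cases h : r < R
  · rw [Set.indicator_of_mem (by exact h)]
    congr 1
    refine integral_congr_ae (.of_forall fun ω => ?_)
    simp [Set.indicator, norm_smul, abs_of_pos hr', h]
  · rw [Set.indicator_of_notMem (by exact h)]
    have : ∀ ω : sphere (0 : Eu (k+1)) 1,
        (ball (0 : Eu (k+1)) R).indicator F (r • (ω : Eu (k+1))) = 0 := by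
      intro ω
      simp [Set.indicator, norm_smul, abs_of_pos hr', h]
    simp [this]

lemma cont_sph (k : ℕ) (F : ℝ → Eu (k+1) → ℝ) (hF : Continuous (Function.uncurry F)) :
    Continuous fun r : ℝ => ∫ ω : sphere (0 : Eu (k+1)) 1, F r ω
        ∂(volume : Measure (Eu (k+1))).toSphere := by
  have := continuous_parametric_integral_of_continuous
    (μ := (volume : Measure (Eu (k+1))).toSphere)
    (f := fun (r : ℝ) (ω : sphere (0 : Eu (k+1)) 1) => F r ω)
    (by exact hF.comp (continuous_fst.prodMk (continuous_subtype_val.comp continuous_snd)))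
    (isCompact_univ)
  simpa using this

lemma div_test (k : ℕ) (f : Fin (k+1) → Eu (k+1) → ℝ) (hf : ∀ j, ContDiff ℝ 1 (f j))
    (M : ℝ) (hM : 0 < M) (ζ ζ' : ℝ → ℝ) (hζ : ∀ s, HasDerivAt ζ (ζ' s) s) (hζ' : Continuous ζ')
    (h0 : ∀ s, M ^ 2 ≤ s → ζ s = 0) (h0' : ∀ s, M ^ 2 ≤ s → ζ' s = 0) :
    ∫ x in ball (0 : Eu (k+1)) M, ζ (‖x‖^2) * ∑ j, fderiv ℝ (f j) x (EuclideanSpace.single j 1)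
     = - ∫ x in ball (0 : Eu (k+1)) M, 2 * ζ' (‖x‖^2) * ∑ j, f j x * x j := by
  have hζc : Continuous ζ := continuous_iff_continuousAt.2 fun s => (hζ s).continuousAt
  have hsq : ∀ x : Eu (k+1), x ∉ ball (0 : Eu (k+1)) M → M ^ 2 ≤ ‖x‖^2 := by
    intro x hx
    have : M ≤ ‖x‖ := by simpa using hx
    gcongr
  have hZ : ∀ x : Eu (k+1), HasFDerivAt (fun x : Eu (k+1) => ζ (‖x‖^2))
      (ζ' (‖x‖^2) • (2 • innerSL ℝ x)) x := fun x =>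
    (hζ (‖x‖^2)).comp_hasFDerivAt x (hasStrictFDerivAt_norm_sq x).hasFDerivAt
  have hfc : ∀ j, Continuous (f j) := fun j => (hf j).continuous
  have hfd : ∀ j, Continuous fun x => fderiv ℝ (f j) x (EuclideanSpace.single j 1) := fun j =>
    ((hf j).continuous_fderiv one_ne_zero).clm_apply continuous_const
  have hZv : ∀ j (x : Eu (k+1)), fderiv ℝ (fun x : Eu (k+1) => ζ (‖x‖^2)) x
      (EuclideanSpace.single j 1) = 2 * ζ' (‖x‖^2) * x j := by
    intro j x
    rw [(hZ x).fderiv]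
    simp [EuclideanSpace.inner_single_right]
    ring
  have hcs : ∀ F : Eu (k+1) → ℝ, Continuous F → (∀ x, M^2 ≤ ‖x‖^2 → F x = 0) → Integrable F := by
    intro F hF hF0
    refine hF.integrable_of_hasCompactSupport ?_
    refine HasCompactSupport.intro (isCompact_closedBall (0 : Eu (k+1)) M) fun x hx => ?_
    exact hF0 x (hsq x fun h => hx (ball_subset_closedBall h))
  have e1 : ∀ j, Integrable fun x : Eu (k+1) => ζ (‖x‖^2) * fderiv ℝ (f j) x (EuclideanSpace.single j 1) :=
    fun j => hcs _ ((hζc.comp (by fun_prop)).mul (hfd j)) fun x hx => by simp [h0 _ hx]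
  have e2 : ∀ j, Integrable fun x : Eu (k+1) => 2 * ζ' (‖x‖^2) * (f j x * x j) :=
    fun j => hcs _ ((continuous_const.mul (hζ'.comp (by fun_prop))).mul ((hfc j).mul (by fun_prop)))
      fun x hx => by simp [h0' _ hx]
  have e3 : ∀ j, Integrable fun x : Eu (k+1) => ζ (‖x‖^2) * f j x :=
    fun j => hcs _ ((hζc.comp (by fun_prop)).mul (hfc j)) fun x hx => by simp [h0 _ hx]
  rw [setIntegral_eq_integral_of_forall_compl_eq_zero fun x hx => by rw [h0 _ (hsq x hx), zero_mul],
    setIntegral_eq_integral_of_forall_compl_eq_zero fun x hx => by simp [h0' _ (hsq x hx)]]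
  simp only [Finset.mul_sum]
  rw [integral_finsetSum _ fun j _ => e1 j, integral_finsetSum _ fun j _ => e2 j,
    ← Finset.sum_neg_distrib]
  refine Finset.sum_congr rfl fun j _ => ?_
  have e2' : Integrable fun x : Eu (k+1) => fderiv ℝ (fun x : Eu (k+1) => ζ (‖x‖^2)) x
      (EuclideanSpace.single j 1) * f j x := by
    refine (e2 j).congr (.of_forall fun x => ?_)
    simp only [hZv]; ring
  rw [integral_mul_fderiv_eq_neg_fderiv_mul_of_integrable e2' (e1 j) (e3 j)
    (fun x _ => (hZ x).differentiableAt) (fun x _ => ((hf j).differentiable one_ne_zero) x)]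
  congr 1
  refine integral_congr_ae (.of_forall fun x => ?_)
  simp only [hZv]; ring

lemma divergence_on_ball (k : ℕ) (f : Fin (k+1) → Eu (k+1) → ℝ) (hf : ∀ j, ContDiff ℝ 1 (f j))
    (R : ℝ) (hR : 0 < R) :
    ∫ x in ball (0 : Eu (k+1)) R, ∑ j, fderiv ℝ (f j) x (EuclideanSpace.single j 1)
     = R ^ k * ∫ ω : sphere (0 : Eu (k+1)) 1, ∑ j, f j (R • (ω : Eu (k+1))) * (ω : Eu (k+1)) j
        ∂(volume : Measure (Eu (k+1))).toSphere := by
  set σ := (volume : Measure (Eu (k+1))).toSphere with hσ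
  have hfc : ∀ j, Continuous (f j) := fun j => (hf j).continuous
  set g : Eu (k+1) → ℝ := fun x => ∑ j, fderiv ℝ (f j) x (EuclideanSpace.single j 1) with hg
  have hgc : Continuous g := continuous_finsetSum _ fun j _ =>
    ((hf j).continuous_fderiv one_ne_zero).clm_apply continuous_const
  set A : ℝ → ℝ := fun r => r ^ k * ∫ ω : sphere (0 : Eu (k+1)) 1, g (r • (ω : Eu (k+1))) ∂σ with hA
  set B : ℝ → ℝ := fun r => r ^ k * ∫ ω : sphere (0 : Eu (k+1)) 1,
    ∑ j, f j (r • (ω : Eu (k+1))) * (ω : Eu (k+1)) j ∂σ with hB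
  have hAc : Continuous A := (continuous_pow k).mul
    (cont_sph k (fun r x => g (r • x)) (hgc.comp (by fun_prop)))
  have hBc : Continuous B := (continuous_pow k).mul
    (cont_sph k (fun r x => ∑ j, f j (r • x) * x j) (continuous_finsetSum _ fun j _ =>
      ((hfc j).comp (by fun_prop)).mul (by fun_prop)))
  set Φ : ℝ → ℝ := fun r => ∫ s in (0:ℝ)..r, A s with hΦ
  have hΦd : ∀ r, HasDerivAt Φ (A r) r := fun r =>
    intervalIntegral.integral_hasDerivAt_right (hAc.intervalIntegrable _ _)
      (hAc.stronglyMeasurableAtFilter _ _) hAc.continuousAt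
  have hΦc : Continuous Φ := continuous_iff_continuousAt.2 fun r => (hΦd r).continuousAt
  rw [polar_ball k g hgc R hR]
  change Φ R = B R
  set M := R + 1 with hMdef
  have hM : 0 < M := by positivity
  set ζ' : ℝ → ℝ := fun s => (Φ (√s) - B (√s)) * max 0 (M^2 - s) with hζ'
  have hζ'c : Continuous ζ' := by
    refine Continuous.mul ((hΦc.comp Real.continuous_sqrt).sub (hBc.comp Real.continuous_sqrt)) (by fun_prop)
  have h0' : ∀ s, M^2 ≤ s → ζ' s = 0 := by
    intro s hs
    simp [hζ', max_eq_left (sub_nonpos.2 hs)]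
  set ζ : ℝ → ℝ := fun s => ∫ a in (M^2)..s, ζ' a with hζ
  have hζd : ∀ s, HasDerivAt ζ (ζ' s) s := fun s =>
    intervalIntegral.integral_hasDerivAt_right (hζ'c.intervalIntegrable _ _)
      (hζ'c.stronglyMeasurableAtFilter _ _) hζ'c.continuousAt
  have hζc : Continuous ζ := continuous_iff_continuousAt.2 fun s => (hζd s).continuousAt
  have h0 : ∀ s, M^2 ≤ s → ζ s = 0 := by
    intro s hs
    simp only [hζ]
    rw [intervalIntegral.integral_congr (g := fun _ => 0)]
    · simp
    · intro a ha
      rw [Set.uIcc_of_le hs] at ha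
      exact h0' a ha.1
  have key := div_test k f hf M hM ζ ζ' hζd hζ'c h0 h0'
  rw [polar_ball k (fun x => ζ (‖x‖^2) * g x) ((hζc.comp (by fun_prop)).mul hgc) M hM,
    polar_ball k (fun x => 2 * ζ' (‖x‖^2) * ∑ j, f j x * x j)
      ((continuous_const.mul (hζ'c.comp (by fun_prop))).mul (continuous_finsetSum _ fun j _ =>
      ((hfc j).mul (by fun_prop)))) M hM] at key
  have k1 : ∫ r in (0:ℝ)..M, r ^ k * ∫ ω : sphere (0 : Eu (k+1)) 1,
      ζ (‖r • (ω : Eu (k+1))‖^2) * g (r • (ω : Eu (k+1))) ∂σ = ∫ r in (0:ℝ)..M, ζ (r^2) * A r := by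
    refine intervalIntegral.integral_congr fun r hr => ?_
    simp only [norm_smul, norm_eq_of_mem_sphere, mul_one, Real.norm_eq_abs, sq_abs, hA]
    rw [integral_const_mul]; ring
  have k2 : ∫ r in (0:ℝ)..M, r ^ k * ∫ ω : sphere (0 : Eu (k+1)) 1,
      2 * ζ' (‖r • (ω : Eu (k+1))‖^2) * ∑ j, f j (r • (ω : Eu (k+1))) * (r • (ω : Eu (k+1))) j ∂σ
      = ∫ r in (0:ℝ)..M, 2 * r * ζ' (r^2) * B r := by
    refine intervalIntegral.integral_congr fun r hr => ?_
    simp only [norm_smul, norm_eq_of_mem_sphere, mul_one, Real.norm_eq_abs, sq_abs, hB]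
    have : ∀ ω : sphere (0 : Eu (k+1)) 1, ∑ j, f j (r • (ω : Eu (k+1))) * (r • (ω : Eu (k+1))) j
        = r * ∑ j, f j (r • (ω : Eu (k+1))) * (ω : Eu (k+1)) j := by
      intro ω
      rw [Finset.mul_sum]
      refine Finset.sum_congr rfl fun j _ => ?_
      simp; ring
    simp only [this]
    rw [integral_const_mul, integral_const_mul]; ring
  rw [k1, k2] at key
  have hcomp : ∀ r, HasDerivAt (fun r => ζ (r^2)) (2 * r * ζ' (r^2)) r := by
    intro r
    have := (hζd (r^2)).comp r (hasDerivAt_pow 2 r)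
    refine this.congr_deriv ?_
    simp; ring
  have cA : Continuous fun r => 2 * r * ζ' (r^2) := by
    exact (by fun_prop : Continuous fun r : ℝ => 2 * r).mul (hζ'c.comp (by fun_prop))
  have k3 := intervalIntegral.integral_mul_deriv_eq_deriv_mul (a := 0) (b := M)
    (u := fun r => ζ (r^2)) (v := Φ) (u' := fun r => 2 * r * ζ' (r^2)) (v' := A)
    (fun r _ => hcomp r) (fun r _ => hΦd r) (cA.intervalIntegrable _ _) (hAc.intervalIntegrable _ _)
  rw [k3] at key
  have hz : ζ (M^2) = 0 := h0 _ le_rfl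
  have hΦ0 : Φ 0 = 0 := by simp [hΦ]
  simp only [hz, hΦ0, zero_mul, mul_zero, sub_zero, zero_sub, neg_inj] at key
  have k4 : ∫ r in (0:ℝ)..M, 2 * r * ζ' (r^2) * (Φ r - B r) = 0 := by
    have : (fun r => 2 * r * ζ' (r^2) * (Φ r - B r)) =
      fun r => 2 * r * ζ' (r^2) * Φ r - 2 * r * ζ' (r^2) * B r := by ext; ring
    have i1 : IntervalIntegrable (fun r => 2 * r * ζ' (r^2) * Φ r) volume 0 M :=
      (cA.mul hΦc).intervalIntegrable _ _
    have i2 : IntervalIntegrable (fun r => 2 * r * ζ' (r^2) * B r) volume 0 M :=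
      (cA.mul hBc).intervalIntegrable _ _
    rw [this, intervalIntegral.integral_sub i1 i2, key, sub_self]
  by_contra hne
  have hpos : 0 < ∫ r in (0:ℝ)..M, 2 * r * ζ' (r^2) * (Φ r - B r) := by
    refine intervalIntegral.integral_pos hM (cA.mul (hΦc.sub hBc)).continuousOn ?_ ⟨R, ⟨hR.le, by simp [hMdef]⟩, ?_⟩
    · intro r hr
      simp only [hζ', Real.sqrt_sq hr.1.le]
      have : 0 ≤ 2 * r * max 0 (M^2 - r^2) * (Φ r - B r)^2 := by
        have := hr.1
        positivity
      linarith
    · simp only [hζ', Real.sqrt_sq hR.le]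
      have h1 : 0 < max 0 (M^2 - R^2) := lt_max_of_lt_right (by rw [hMdef]; nlinarith)
      have h2 : 0 < (Φ R - B R)^2 := by
        have : Φ R - B R ≠ 0 := sub_ne_zero.2 hne
        positivity
      have : 0 < 2 * R * max 0 (M^2 - R^2) * (Φ R - B R)^2 := by positivity
      linarith
  exact hpos.ne' k4


lemma unif_aux {n : ℕ} (ρ ν : Measure (Eu n)) [IsFiniteMeasure ρ] [IsFiniteMeasure ν]
    (hac : ρ ≪ ν) (hν : ν (sphere (0 : Eu n) 1)ᶜ = 0)
    (h1 : ∀ x ∈ sphere (0 : Eu n) 1, ∀ y ∈ sphere (0 : Eu n) 1, ∀ r,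
      ρ (closedBall x r) = ρ (closedBall y r))
    (h2 : ∀ x ∈ sphere (0 : Eu n) 1, ∀ y ∈ sphere (0 : Eu n) 1, ∀ r,
      ν (closedBall x r) = ν (closedBall y r)) : ∃ a : ENNReal, ρ = a • ν := by
  by_cases hν0 : ν = 0
  · refine ⟨0, ?_⟩
    rw [hν0] at hac ⊢
    simpa using hac
  have hne : (ae ν).NeBot := ae_neBot.2 hν0
  have hae := Besicovitch.ae_tendsto_rnDeriv ρ ν
  have hS : ∀ᵐ x ∂ν, x ∈ sphere (0 : Eu n) 1 := by
    rw [ae_iff]; exact hν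
  obtain ⟨x0, hx0, hx0S⟩ := (hae.and hS).exists
  refine ⟨ρ.rnDeriv ν x0, ?_⟩
  have : ρ.rnDeriv ν =ᵐ[ν] fun _ => ρ.rnDeriv ν x0 := by
    filter_upwards [hae, hS] with x hx hxS
    refine tendsto_nhds_unique hx ?_
    simpa only [h1 x hxS x0 hx0S, h2 x hxS x0 hx0S] using hx0
  have hLD : ρ.HaveLebesgueDecomposition ν := Measure.haveLebesgueDecomposition_of_sigmaFinite ρ ν
  rw [← withDensity_const, ← withDensity_congr_ae this, Measure.withDensity_rnDeriv_eq ρ ν hac]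

lemma unif {n : ℕ} (ρ μ : Measure (Eu n)) [IsFiniteMeasure ρ] [IsFiniteMeasure μ]
    (hρ : ρ (sphere (0 : Eu n) 1)ᶜ = 0) (hμ : μ (sphere (0 : Eu n) 1)ᶜ = 0)
    (h1 : ∀ x ∈ sphere (0 : Eu n) 1, ∀ y ∈ sphere (0 : Eu n) 1, ∀ r,
      ρ (closedBall x r) = ρ (closedBall y r))
    (h2 : ∀ x ∈ sphere (0 : Eu n) 1, ∀ y ∈ sphere (0 : Eu n) 1, ∀ r,
      μ (closedBall x r) = μ (closedBall y r)) (h0 : μ ≠ 0) : ∃ a : ENNReal, ρ = a • μ := by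
  have hs : (ρ + μ) (sphere (0 : Eu n) 1)ᶜ = 0 := by simp [hρ, hμ]
  have h3 : ∀ x ∈ sphere (0 : Eu n) 1, ∀ y ∈ sphere (0 : Eu n) 1, ∀ r,
      (ρ + μ) (closedBall x r) = (ρ + μ) (closedBall y r) := by
    intro x hx y hy r
    simp [h1 x hx y hy r, h2 x hx y hy r]
  obtain ⟨a, ha⟩ := unif_aux ρ (ρ + μ) (Measure.AbsolutelyContinuous.rfl.add_right _) hs h1 h3
  obtain ⟨b, hb⟩ := unif_aux μ (ρ + μ) (by rw [add_comm]; exact Measure.AbsolutelyContinuous.rfl.add_right _) hs h2 h3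
  have hb0 : b ≠ 0 := by
    rintro rfl
    exact h0 (by rw [hb, zero_smul])
  have hbt : b ≠ ⊤ := by
    rintro rfl
    have h4 : (ρ + μ) Set.univ ≠ 0 := by
      rw [Ne, Measure.measure_univ_eq_zero]
      intro h
      rw [h, smul_zero] at hb
      exact h0 hb
    have h5 : μ Set.univ = ⊤ := by
      rw [hb, Measure.smul_apply, smul_eq_mul, ENNReal.top_mul h4]
    exact measure_ne_top μ _ h5
  refine ⟨a * b⁻¹, ?_⟩
  have : b⁻¹ • μ = ρ + μ := by
    conv_lhs => rw [hb]
    rw [smul_smul, ENNReal.inv_mul_cancel hb0 hbt, one_smul]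
  rw [← smul_smul, this]
  exact ha

lemma exists_isom {n : ℕ} (x y : Eu n) (hx : x ∈ sphere (0 : Eu n) 1) (hy : y ∈ sphere (0 : Eu n) 1) :
    ∃ e : Eu n ≃ₗᵢ[ℝ] Eu n, e x = y := by
  refine ⟨(ℝ ∙ (x - y))ᗮ.reflection, Submodule.reflection_sub ?_⟩
  simp_all

lemma sphere_haus_inv {n : ℕ} (d : ℝ) (x y : Eu n) (hx : x ∈ sphere (0 : Eu n) 1)
    (hy : y ∈ sphere (0 : Eu n) 1) (r : ℝ) :
    (μH[d] : Measure (Eu n)).restrict (sphere 0 1) (closedBall x r) =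
    (μH[d] : Measure (Eu n)).restrict (sphere 0 1) (closedBall y r) := by
  obtain ⟨e, he⟩ := exists_isom x y hx hy
  rw [Measure.restrict_apply measurableSet_closedBall, Measure.restrict_apply measurableSet_closedBall,
    ← e.toIsometryEquiv.hausdorffMeasure_image d (closedBall x r ∩ _)]
  congr 1
  rw [Set.image_inter e.toIsometryEquiv.injective]
  simp [he]

open scoped Pointwise in
lemma sphere_vol_inv {n : ℕ} (x y : Eu n) (hx : x ∈ sphere (0 : Eu n) 1)
    (hy : y ∈ sphere (0 : Eu n) 1) (r : ℝ) :
    (volume : Measure (Eu n)).toSphere.map Subtype.val (closedBall x r) =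
    (volume : Measure (Eu n)).toSphere.map Subtype.val (closedBall y r) := by
  obtain ⟨e, he⟩ := exists_isom y x hy hx
  have hm : Measurable (Subtype.val : sphere (0 : Eu n) 1 → Eu n) := measurable_subtype_coe
  rw [Measure.map_apply hm measurableSet_closedBall, Measure.map_apply hm measurableSet_closedBall,
    Measure.toSphere_apply' _ (hm measurableSet_closedBall),
    Measure.toSphere_apply' _ (hm measurableSet_closedBall)]
  congr 1
  rw [Subtype.image_preimage_coe, Subtype.image_preimage_coe,
    ← (e.measurePreserving).measure_preimage_equiv (f := e.toHomeomorph.toMeasurableEquiv)]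
  congr 1
  ext z
  simp only [Set.mem_preimage, Set.mem_smul]
  constructor
  · rintro ⟨t, ht, w, ⟨hw, hw'⟩, h⟩
    refine ⟨t, ht, e.symm w, ⟨?_, ?_⟩, ?_⟩
    · simpa using hw
    · rw [mem_closedBall, ← e.dist_map, he]; simpa using hw'
    · apply e.injective
      rw [map_smul, e.apply_symm_apply, h]; rfl
  · rintro ⟨t, ht, w, ⟨hw, hw'⟩, rfl⟩
    refine ⟨t, ht, e w, ⟨?_, ?_⟩, ?_⟩
    · simpa using hw
    · rw [← he]; simpa using hw'
    · exact (map_smul e t w).symm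


lemma sphere_haus_ne_zero (k : ℕ) : (μH[(k:ℝ)] : Measure (Eu (k+1))) (sphere 0 1) ≠ 0 := by
  intro h0
  set π : Eu (k+1) → (Fin k → ℝ) := fun x j => x j.castSucc with hπ
  have hL : LipschitzWith 1 π := by
    refine LipschitzWith.of_dist_le_mul fun x y => ?_
    rw [NNReal.coe_one, one_mul, dist_pi_le_iff dist_nonneg]
    intro j
    have := PiLp.norm_apply_le (x - y) j.castSucc
    simpa [hπ, dist_eq_norm] using this
  have h1 := hL.hausdorffMeasure_image_le (d := (k:ℝ)) (by positivity) (sphere 0 1)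
  rw [h0, mul_zero] at h1
  have hsub : ball (0 : Fin k → ℝ) (1 / (k+1)) ⊆ π '' sphere 0 1 := by
    intro y hy
    have hy1 : ∀ j, |y j| < 1 / (k+1) := by
      intro j
      have : ‖y‖ < 1 / (k+1) := by simpa using hy
      exact (norm_le_pi_norm y j).trans_lt this
    have hsum : ∑ j, (y j)^2 ≤ 1 := by
      have hk : (0:ℝ) < k + 1 := by positivity
      calc ∑ j, (y j)^2 ≤ ∑ j : Fin k, (1 / ((k:ℝ)+1)) := by
            refine Finset.sum_le_sum fun j _ => ?_
            have h3 := hy1 j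
            have h4 : (1:ℝ) / (k+1) ≤ 1 := by rw [div_le_one hk]; linarith [(Nat.cast_nonneg k : (0:ℝ) ≤ k)]
            rw [← sq_abs]
            nlinarith [abs_nonneg (y j)]
        _ ≤ 1 := by
            simp
            rw [← div_eq_mul_inv, div_le_one hk]; linarith
    refine ⟨WithLp.toLp 2 (Fin.snoc y (√(1 - ∑ j, (y j)^2)) : Fin (k+1) → ℝ), ?_, ?_⟩
    · rw [mem_sphere_zero_iff_norm, EuclideanSpace.norm_eq, Real.sqrt_eq_one, Fin.sum_univ_castSucc]
      simp [Real.sq_sqrt (sub_nonneg.2 hsum)]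
    · ext j; simp [hπ]
  have h2 : (μH[(k:ℝ)] : Measure (Fin k → ℝ)) (ball 0 (1 / (k+1))) = 0 :=
    le_antisymm ((measure_mono hsub).trans h1) bot_le
  have h3 := hausdorffMeasure_pi_real (ι := Fin k)
  rw [Fintype.card_fin] at h3
  rw [h3] at h2
  exact (measure_ball_pos volume (0 : Fin k → ℝ) (by positivity)).ne' h2

lemma sphere_haus_lt_top (k : ℕ) : (μH[(k:ℝ)] : Measure (Eu (k+1))) (sphere 0 1) < ⊤ := by
  set z : Fin (k+1) → ℝ → (Fin k → ℝ) → Eu (k+1) := fun i ε y =>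
    WithLp.toLp 2 (i.insertNth ε y : Fin (k+1) → ℝ) with hz
  set ψ : Fin (k+1) → ℝ → (Fin k → ℝ) → Eu (k+1) := fun i ε y => ‖z i ε y‖⁻¹ • z i ε y with hψ
  have hzi : ∀ i ε y, z i ε y i = ε := by intro i ε y; simp [hz]
  have hzc : ∀ i ε, ContDiff ℝ 1 (z i ε) := by
    intro i ε
    rw [contDiff_euclidean]
    intro j
    refine Fin.succAboveCases i ?_ (fun j => ?_) j
    · simpa [hz] using contDiff_const
    · simpa [hz] using contDiff_apply ℝ ℝ j
  have hψc : ∀ i ε, ε ≠ 0 → ContDiff ℝ 1 (ψ i ε) := by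
    intro i ε hε
    have hne : ∀ y, z i ε y ≠ 0 := fun y h => hε (by rw [← hzi i ε y, h]; simp)
    exact (((hzc i ε).norm ℝ hne).inv fun y => norm_ne_zero_iff.2 (hne y)).smul (hzc i ε)
  have hfin : ∀ i ε, ε ≠ 0 →
      (μH[(k:ℝ)] : Measure (Eu (k+1))) (ψ i ε '' closedBall 0 1) < ⊤ := by
    intro i ε hε
    obtain ⟨K, hK⟩ := ((hψc i ε hε).locallyLipschitz.locallyLipschitzOn
      (s := closedBall 0 1)).exists_lipschitzOnWith_of_compact (isCompact_closedBall 0 1)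
    refine (hK.hausdorffMeasure_image_le (d := (k:ℝ)) (by positivity)).trans_lt ?_
    have h3 := hausdorffMeasure_pi_real (ι := Fin k)
    rw [Fintype.card_fin] at h3
    rw [h3]
    exact ENNReal.mul_lt_top (ENNReal.rpow_lt_top_of_nonneg (by positivity) ENNReal.coe_ne_top)
      measure_closedBall_lt_top
  have hcov : sphere (0 : Eu (k+1)) 1 ⊆ ⋃ i, (ψ i 1 '' closedBall 0 1 ∪ ψ i (-1) '' closedBall 0 1) := by
    intro x hx
    have hx1 : ‖x‖ = 1 := by simpa using hx
    obtain ⟨i, -, hi⟩ := Finset.exists_max_image Finset.univ (fun i => |x i|) Finset.univ_nonempty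
    have hxi : x i ≠ 0 := by
      intro h
      have : x = 0 := by
        ext j
        have := hi j (Finset.mem_univ _)
        rw [h, abs_zero] at this
        simpa using this
      rw [this] at hx1; simp at hx1
    have habs : 0 < |x i| := abs_pos.2 hxi
    set y : Fin k → ℝ := fun j => x (i.succAbove j) / |x i| with hy
    have hyb : y ∈ closedBall (0 : Fin k → ℝ) 1 := by
      rw [mem_closedBall_zero_iff, pi_norm_le_iff_of_nonneg zero_le_one]
      intro j
      rw [hy, Real.norm_eq_abs, abs_div, abs_abs, div_le_one habs]
      exact hi _ (Finset.mem_univ _)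
    have hzx : z i (x i / |x i|) y = |x i|⁻¹ • x := by
      ext j
      refine Fin.succAboveCases i ?_ (fun j => ?_) j
      · simp [hz]; field_simp
      · simp [hz, hy]; field_simp
    have hψx : ψ i (x i / |x i|) y = x := by
      simp only [hψ, hzx, norm_smul, hx1, smul_smul]
      simp [hxi]
    refine Set.mem_iUnion.2 ⟨i, ?_⟩
    rcases hxi.lt_or_gt with h | h
    · right
      refine ⟨y, hyb, ?_⟩
      rw [abs_of_neg h, div_neg, div_self hxi] at hψx
      exact hψx
    · left
      rw [abs_of_pos h, div_self hxi] at hψx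
      exact ⟨y, hyb, hψx⟩
  refine (measure_mono hcov).trans_lt ((measure_iUnion_le _).trans_lt ?_)
  rw [tsum_fintype]
  refine ENNReal.sum_lt_top.2 fun i _ => (measure_union_le _ _).trans_lt ?_
  exact ENNReal.add_lt_top.2 ⟨hfin i 1 one_ne_zero, hfin i (-1) (by norm_num)⟩

lemma toSphere_eq_haus (k : ℕ) : ∃ a : ENNReal,
    (volume : Measure (Eu (k+1))).toSphere.map Subtype.val
      = a • (μH[(k:ℝ)] : Measure (Eu (k+1))).restrict (sphere 0 1) := by
  have : IsFiniteMeasure ((μH[(k:ℝ)] : Measure (Eu (k+1))).restrict (sphere 0 1)) :=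
    isFiniteMeasure_restrict.2 (sphere_haus_lt_top k).ne
  have hms : MeasurableSet (sphere (0 : Eu (k+1)) 1) := isClosed_sphere.measurableSet
  refine unif _ _ ?_ ?_ (fun x hx y hy r => sphere_vol_inv x y hx hy r)
    (fun x hx y hy r => sphere_haus_inv _ x y hx hy r) ?_
  · rw [Measure.map_apply measurable_subtype_coe hms.compl]
    have : (Subtype.val ⁻¹' (sphere (0 : Eu (k+1)) 1)ᶜ : Set (sphere (0 : Eu (k+1)) 1)) = ∅ := by
      ext ω; simp
    rw [this, measure_empty]
  · rw [Measure.restrict_apply hms.compl]; simp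
  · intro h
    have := congrArg (fun m => m Set.univ) h
    simp only [Measure.restrict_apply_univ] at this
    exact sphere_haus_ne_zero k (by simpa using this)

open scoped Pointwise in
lemma haus_scale (k : ℕ) (R : ℝ) (hR : 0 < R) (F : Eu (k+1) → ℝ) :
    ∫ x in sphere (0 : Eu (k+1)) R, F x ∂μH[(k:ℝ)] =
      R ^ k * ∫ x in sphere (0 : Eu (k+1)) 1, F (R • x) ∂μH[(k:ℝ)] := by
  have hmp : ((μH[(k:ℝ)] : Measure (Eu (k+1))).restrict (sphere 0 R)) =
      ENNReal.ofReal (R^k) • ((μH[(k:ℝ)] : Measure (Eu (k+1))).restrict (sphere 0 1)).map (R • ·) := by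
    ext s hs
    rw [Measure.smul_apply, Measure.map_apply (measurable_const_smul R) hs,
      Measure.restrict_apply hs, Measure.restrict_apply (measurable_const_smul R hs)]
    have : s ∩ sphere 0 R = R • ((fun x => R • x) ⁻¹' s ∩ sphere (0 : Eu (k+1)) 1) := by
      ext x
      rw [Set.mem_smul_set_iff_inv_smul_mem₀ hR.ne']
      simp [smul_smul, hR.ne', norm_smul, abs_of_pos hR, inv_mul_eq_one₀ hR.ne', eq_comm]
    rw [this, Measure.hausdorffMeasure_smul₀ (by positivity) hR.ne']
    rw [ENNReal.smul_def, smul_eq_mul, smul_eq_mul]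
    congr 1
    rw [NNReal.rpow_natCast, ENNReal.ofReal, Real.toNNReal_pow hR.le, Real.toNNReal_eq_nnnorm_of_nonneg hR.le]
  rw [hmp, integral_smul_measure, ENNReal.toReal_ofReal (by positivity), smul_eq_mul]
  congr 1
  exact (Homeomorph.smulOfNeZero R hR.ne').measurableEmbedding.integral_map _

lemma divergence_haus (k : ℕ) : ∃ c : ℝ, ∀ (f : Fin (k+1) → Eu (k+1) → ℝ)
    (_ : ∀ j, ContDiff ℝ 1 (f j)) (R : ℝ) (_ : 0 < R),
    ∫ x in ball (0 : Eu (k+1)) R, ∑ j, fderiv ℝ (f j) x (EuclideanSpace.single j 1)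
     = c * ∫ x in sphere (0 : Eu (k+1)) R, ∑ j, f j x * (‖x‖⁻¹ • x) j ∂μH[(k:ℝ)] := by
  obtain ⟨a, ha⟩ := toSphere_eq_haus k
  refine ⟨a.toReal, fun f hf R hR => ?_⟩
  have h1 : ∫ ω : sphere (0 : Eu (k+1)) 1, ∑ j, f j (R • (ω : Eu (k+1))) * (ω : Eu (k+1)) j
        ∂(volume : Measure (Eu (k+1))).toSphere =
      ∫ x, ∑ j, f j (R • x) * x j ∂((volume : Measure (Eu (k+1))).toSphere.map Subtype.val) :=
    ((MeasurableEmbedding.subtype_coe isClosed_sphere.measurableSet).integral_map 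
      (fun x : Eu (k+1) => ∑ j, f j (R • x) * x j)).symm
  rw [divergence_on_ball k f hf R hR, haus_scale k R hR, h1, ha, integral_smul_measure, smul_eq_mul]
  have h2 : ∫ x in sphere (0 : Eu (k+1)) 1, ∑ j, f j (R • x) * (‖R • x‖⁻¹ • R • x) j ∂μH[(k:ℝ)]
      = ∫ x in sphere (0 : Eu (k+1)) 1, ∑ j, f j (R • x) * x j ∂μH[(k:ℝ)] := by
    refine setIntegral_congr_fun isClosed_sphere.measurableSet fun x hx => ?_
    have hx1 : ‖x‖ = 1 := by simpa using hx
    simp [norm_smul, hx1, abs_of_pos hR, hR.ne']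
  rw [h2]; ring


lemma rpow_sq_mul (p : ℝ) (hp : 1 < p) (r : ℝ) (hr : 0 ≤ r) : r ^ (p - 2) * r ^ 2 = r ^ p := by
  rcases hr.eq_or_lt with rfl | h
  · rw [Real.zero_rpow (show p ≠ 0 by linarith)]; simp
  · rw [← Real.rpow_natCast, ← Real.rpow_add h]; simp

lemma Q_bound {N : ℕ} (p : ℝ) (hp : 1 < p) (a b : Fin N) (v : Eu N) :
    |‖v‖ ^ (p - 2) * (v a * v b)| ≤ ‖v‖ ^ p := by
  rw [← rpow_sq_mul p hp _ (norm_nonneg v), abs_mul, abs_of_nonneg (by positivity), abs_mul, sq]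
  have h1 : |v a| ≤ ‖v‖ := PiLp.norm_apply_le v a
  have h2 : |v b| ≤ ‖v‖ := PiLp.norm_apply_le v b
  gcongr

lemma Q_hasFDerivAt_zero {N : ℕ} (p : ℝ) (hp : 1 < p) (a b : Fin N) :
    HasFDerivAt (fun v : Eu N => ‖v‖ ^ (p - 2) * (v a * v b)) (0 : Eu N →L[ℝ] ℝ) 0 := by
  have h := hasFDerivAt_norm_rpow (0 : Eu N) hp
  rw [hasFDerivAt_iff_isLittleO_nhds_zero] at h ⊢
  refine Asymptotics.IsBigO.trans_isLittleO ?_ h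
  refine Asymptotics.IsBigO.of_bound 1 (.of_forall fun v => ?_)
  have := Q_bound p hp a b v
  have h0 : (0:ℝ) ^ p = 0 := Real.zero_rpow (by linarith)
  simp only [zero_add, norm_zero, h0]
  simpa [abs_of_nonneg (Real.rpow_nonneg (norm_nonneg v) p)] using this

lemma normpow_hasFDerivAt {N : ℕ} (q : ℝ) (v : Eu N) (hv : v ≠ 0) :
    HasFDerivAt (fun v : Eu N => ‖v‖ ^ q) ((q * ‖v‖ ^ (q - 2)) • innerSL ℝ v) v := by
  have h1 := (hasStrictFDerivAt_norm_sq v).hasFDerivAt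
  have hn : 0 < ‖v‖ := norm_pos_iff.2 hv
  have h2 := h1.rpow_const (p := q / 2) (Or.inl (by positivity))
  have e : ∀ (r : ℝ), 0 ≤ r → ∀ s : ℝ, (r ^ 2) ^ s = r ^ (2 * s) := by
    intro r hr s
    rw [Real.rpow_mul hr]; simp
  refine (h2.congr_fderiv ?_).congr_of_eventuallyEq (.of_forall fun x => ?_)
  · ext z
    simp only [smul_apply, e _ hn.le, smul_eq_mul, nsmul_eq_mul]
    rw [show 2 * (q / 2 - 1) = q - 2 by ring]
    push_cast; ring
  · simp only [e _ (norm_nonneg x)]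
    congr 1; ring

lemma Q_hasFDerivAt {N : ℕ} (p : ℝ) (a b : Fin N) (v : Eu N) (hv : v ≠ 0) :
    HasFDerivAt (fun v : Eu N => ‖v‖ ^ (p - 2) * (v a * v b))
      (‖v‖ ^ (p-2) • (v a • EuclideanSpace.proj b + v b • EuclideanSpace.proj a) +
        (v a * v b) • (((p - 2) * ‖v‖ ^ (p - 2 - 2)) • innerSL ℝ v) : Eu N →L[ℝ] ℝ) v := by
  have h1 := normpow_hasFDerivAt (p - 2) v hv
  have ha : HasFDerivAt (fun v : Eu N => v a) (EuclideanSpace.proj a : Eu N →L[ℝ] ℝ) v :=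
    (EuclideanSpace.proj a : Eu N →L[ℝ] ℝ).hasFDerivAt
  have hb : HasFDerivAt (fun v : Eu N => v b) (EuclideanSpace.proj b : Eu N →L[ℝ] ℝ) v :=
    (EuclideanSpace.proj b : Eu N →L[ℝ] ℝ).hasFDerivAt
  exact h1.mul (ha.mul hb)

lemma proj_norm_le {N : ℕ} (a : Fin N) : ‖(EuclideanSpace.proj a : Eu N →L[ℝ] ℝ)‖ ≤ 1 :=
  ContinuousLinearMap.opNorm_le_bound _ zero_le_one fun v => by
    simpa using PiLp.norm_apply_le v a

lemma Q_fderiv_bound {N : ℕ} (p : ℝ) (hp : 1 < p) (a b : Fin N) (v : Eu N) :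
    ‖fderiv ℝ (fun v : Eu N => ‖v‖ ^ (p - 2) * (v a * v b)) v‖ ≤ (2 + |p - 2|) * ‖v‖ ^ (p - 1) := by
  by_cases hv : v = 0
  · subst hv
    rw [(Q_hasFDerivAt_zero p hp a b).fderiv, norm_zero]; positivity
  have hn : 0 < ‖v‖ := norm_pos_iff.2 hv
  have h1 : |v a| ≤ ‖v‖ := PiLp.norm_apply_le v a
  have h2 : |v b| ≤ ‖v‖ := PiLp.norm_apply_le v b
  rw [(Q_hasFDerivAt p a b v hv).fderiv]
  have e1 : ‖v‖ ^ (p - 2) * ‖v‖ = ‖v‖ ^ (p - 1) := by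
    rw [← Real.rpow_add_one hn.ne']; congr 1; ring
  have e2 : ‖v‖ ^ (p - 2 - 2) * ‖v‖ ^ 2 = ‖v‖ ^ (p - 2) := by
    rw [← Real.rpow_natCast, ← Real.rpow_add hn]; congr 1; push_cast; ring
  refine (norm_add_le _ _).trans ?_
  have b1 : ‖(‖v‖ ^ (p-2) • (v a • EuclideanSpace.proj b + v b • EuclideanSpace.proj a) : Eu N →L[ℝ] ℝ)‖
      ≤ ‖v‖ ^ (p-2) * (‖v‖ * 1 + ‖v‖ * 1) := by
    rw [norm_smul, Real.norm_of_nonneg (by positivity)]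
    gcongr
    refine (norm_add_le _ _).trans ?_
    rw [norm_smul, norm_smul, Real.norm_eq_abs, Real.norm_eq_abs]
    gcongr
    · exact proj_norm_le b
    · exact proj_norm_le a
  have b2 : ‖((v a * v b) • (((p - 2) * ‖v‖ ^ (p - 2 - 2)) • innerSL ℝ v) : Eu N →L[ℝ] ℝ)‖
      ≤ (‖v‖ * ‖v‖) * ((|p - 2| * ‖v‖ ^ (p - 2 - 2)) * ‖v‖) := by
    rw [norm_smul, norm_smul, innerSL_apply_norm, norm_mul, norm_mul, Real.norm_eq_abs, Real.norm_eq_abs,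
      Real.norm_eq_abs, Real.norm_of_nonneg (Real.rpow_nonneg hn.le _)]
    gcongr
  calc _ ≤ ‖v‖ ^ (p-2) * (‖v‖ * 1 + ‖v‖ * 1) + (‖v‖ * ‖v‖) * ((|p - 2| * ‖v‖ ^ (p - 2 - 2)) * ‖v‖) :=
        add_le_add b1 b2
    _ = 2 * (‖v‖ ^ (p - 2) * ‖v‖) + |p - 2| * ((‖v‖ ^ (p - 2 - 2) * ‖v‖ ^ 2) * ‖v‖) := by ring
    _ = _ := by rw [e2, e1]; ring

lemma Q_contDiff {N : ℕ} (p : ℝ) (hp : 1 < p) (a b : Fin N) :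
    ContDiff ℝ 1 (fun v : Eu N => ‖v‖ ^ (p - 2) * (v a * v b)) := by
  rw [contDiff_one_iff_fderiv]
  have hd : ∀ v : Eu N, DifferentiableAt ℝ (fun v : Eu N => ‖v‖ ^ (p - 2) * (v a * v b)) v := by
    intro v
    by_cases hv : v = 0
    · subst hv; exact (Q_hasFDerivAt_zero p hp a b).differentiableAt
    · exact (Q_hasFDerivAt p a b v hv).differentiableAt
  refine ⟨hd, continuous_iff_continuousAt.2 fun v => ?_⟩
  by_cases hv : v = 0
  · subst hv
    rw [ContinuousAt, (Q_hasFDerivAt_zero p hp a b).fderiv]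
    refine squeeze_zero_norm (Q_fderiv_bound p hp a b) ?_
    have : Continuous fun v : Eu N => (2 + |p - 2|) * ‖v‖ ^ (p - 1) :=
      continuous_const.mul (continuous_norm.rpow_const fun _ => Or.inr (by linarith))
    have h := this.tendsto 0
    simpa [Real.zero_rpow (show p - 1 ≠ 0 by linarith)] using h
  · have h1 : ContDiffAt ℝ 1 (fun v : Eu N => ‖v‖ ^ (p - 2) * (v a * v b)) v := by
      refine ((contDiffAt_norm ℝ hv).rpow_const_of_ne (norm_ne_zero_iff.2 hv)).mul ?_
      exact ((EuclideanSpace.proj a : Eu N →L[ℝ] ℝ).contDiff.contDiffAt).mul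
        ((EuclideanSpace.proj b : Eu N →L[ℝ] ℝ).contDiff.contDiffAt)
    exact h1.continuousAt_fderiv one_ne_zero

lemma grad_apply {N : ℕ} (u : Eu N → ℝ) (x : Eu N) (b : Fin N) :
    gradient u x b = fderiv ℝ u x (EuclideanSpace.single b 1) := by
  have : ⟪gradient u x, EuclideanSpace.single b (1:ℝ)⟫ = fderiv ℝ u x (EuclideanSpace.single b 1) := by
    simp [gradient]
  rw [← this, EuclideanSpace.inner_single_right]; simp

lemma grad_contDiff {N : ℕ} (u : Eu N → ℝ) (hu : ContDiff ℝ 2 u) : ContDiff ℝ 1 (gradient u) := by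
  rw [contDiff_euclidean]
  intro b
  simp only [grad_apply]
  exact (hu.fderiv_right (m := 1) (by norm_num)).clm_apply contDiff_const

lemma grad_symm {N : ℕ} (u : Eu N → ℝ) (hu : ContDiff ℝ 2 u) (y : Eu N) (a b : Fin N) :
    fderiv ℝ (gradient u) y (EuclideanSpace.single a 1) b
      = fderiv ℝ (gradient u) y (EuclideanSpace.single b 1) a := by
  have hd := (grad_contDiff u hu).differentiable one_ne_zero y
  have hd2 : DifferentiableAt ℝ (fderiv ℝ u) y :=
    (hu.fderiv_right (m := 1) (by norm_num)).differentiable one_ne_zero y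
  have h : ∀ a b : Fin N, fderiv ℝ (gradient u) y (EuclideanSpace.single a 1) b
      = fderiv ℝ (fderiv ℝ u) y (EuclideanSpace.single a 1) (EuclideanSpace.single b 1) := by
    intro a b
    have h1 : HasFDerivAt (fun y => gradient u y b)
        ((EuclideanSpace.proj b : Eu N →L[ℝ] ℝ).comp (fderiv ℝ (gradient u) y)) y :=
      (EuclideanSpace.proj b : Eu N →L[ℝ] ℝ).hasFDerivAt.comp y hd.hasFDerivAt
    have h2 : HasFDerivAt (fun y => fderiv ℝ u y (EuclideanSpace.single b 1))
        ((fderiv ℝ (fderiv ℝ u) y).flip (EuclideanSpace.single b 1)) y := by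
      exact (hd2.hasFDerivAt.clm_apply (hasFDerivAt_const _ y)).congr_fderiv (by ext; simp)
    have h3 : (fun y => gradient u y b) = fun y => fderiv ℝ u y (EuclideanSpace.single b 1) := by
      ext y; exact grad_apply u y b
    rw [h3] at h1
    have := congrArg (fun L : Eu N →L[ℝ] ℝ => L (EuclideanSpace.single a 1)) (h1.unique h2)
    simpa using this
  rw [h, h]
  have := hu.contDiffAt (x := y) |>.isSymmSndFDerivAt (by simp)
  exact this _ _

lemma stress {N : ℕ} (p : ℝ) (hp : 1 < p) (u : Eu N → ℝ) (hu : ContDiff ℝ 2 u) (k : Fin N) (y : Eu N) :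
    ∑ b, fderiv ℝ (fun y => ‖gradient u y‖ ^ (p - 2) * (gradient u y b * gradient u y k)) y
        (EuclideanSpace.single b 1)
      = fderiv ℝ (fun y => (1 / p) * ‖gradient u y‖ ^ p) y (EuclideanSpace.single k 1)
        + vdiv (fun y => ‖gradient u y‖ ^ (p - 2) • gradient u y) y * gradient u y k := by
  have hw := grad_contDiff u hu
  have hwd := hw.differentiable one_ne_zero
  have hP : fderiv ℝ (fun y => (1 / p) * ‖gradient u y‖ ^ p) y (EuclideanSpace.single k 1)
      = ‖gradient u y‖ ^ (p - 2) * ∑ b, gradient u y b *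
        fderiv ℝ (gradient u) y (EuclideanSpace.single k 1) b := by
    have h1 := ((hasFDerivAt_norm_rpow (gradient u y) hp).comp y (hwd y).hasFDerivAt).const_mul (1 / p)
    have h2 : (fun y => (1 / p) * ‖gradient u y‖ ^ p) =
      fun y => (1/p) * ((fun x : Eu N => ‖x‖ ^ p) ∘ gradient u) y := rfl
    rw [h2, h1.fderiv]
    have hp0 : p ≠ 0 := by linarith
    have hin : ∀ a b : Eu N, inner ℝ a b = ∑ i, a i * b i := by
      intro a b
      rw [PiLp.inner_apply]
      exact Finset.sum_congr rfl fun i _ => by simp [mul_comm]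
    have hz : ∀ (a z : Eu N), ((1 / p) • ((p * ‖a‖ ^ (p - 2)) • innerSL ℝ a) : Eu N →L[ℝ] ℝ) z
        = ‖a‖ ^ (p - 2) * ∑ b, a b * z b := by
      intro a z
      rw [← hin]
      simp only [smul_apply, innerSL_apply_apply, smul_eq_mul]
      field_simp
    exact hz _ _
  by_cases h0 : gradient u y = 0
  · have : ∀ b, fderiv ℝ (fun y => ‖gradient u y‖ ^ (p - 2) * (gradient u y b * gradient u y k)) y = 0 := by
      intro b
      have h1 := Q_hasFDerivAt_zero p hp b k
      rw [← h0] at h1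
      have h2 := h1.comp y (hwd y).hasFDerivAt
      exact h2.fderiv.trans (by simp)
    rw [hP]
    simp [this, h0]
  · have hφ : DifferentiableAt ℝ (fun y => ‖gradient u y‖ ^ (p - 2)) y :=
      ((normpow_hasFDerivAt (p - 2) _ h0).comp y (hwd y).hasFDerivAt).differentiableAt
    have hF : DifferentiableAt ℝ (fun y => ‖gradient u y‖ ^ (p - 2) • gradient u y) y := hφ.smul (hwd y)
    have hc : ∀ (W : Eu N → Eu N), DifferentiableAt ℝ W y → ∀ b, HasFDerivAt (fun y => W y b)
        ((EuclideanSpace.proj b : Eu N →L[ℝ] ℝ).comp (fderiv ℝ W y)) y := fun W hW b =>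
      (EuclideanSpace.proj b : Eu N →L[ℝ] ℝ).hasFDerivAt.comp y hW.hasFDerivAt
    have hQ : ∀ b, fderiv ℝ (fun y => ‖gradient u y‖ ^ (p - 2) * (gradient u y b * gradient u y k)) y
        (EuclideanSpace.single b 1) = (‖gradient u y‖ ^ (p - 2) * gradient u y b) *
          fderiv ℝ (gradient u) y (EuclideanSpace.single b 1) k + gradient u y k *
          fderiv ℝ (fun y => ‖gradient u y‖ ^ (p - 2) • gradient u y) y (EuclideanSpace.single b 1) b := by
      intro b
      have h1 := (hc _ hF b).mul (hc _ (hwd y) k)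
      have h2 : (fun y => ‖gradient u y‖ ^ (p - 2) * (gradient u y b * gradient u y k)) =
          fun y => (‖gradient u y‖ ^ (p - 2) • gradient u y) b * gradient u y k := by
        ext y; simp; ring
      rw [h2]
      refine (congrArg (fun L : Eu N →L[ℝ] ℝ => L (EuclideanSpace.single b 1)) h1.fderiv).trans ?_
      simp
    simp only [hQ, Finset.sum_add_distrib, ← Finset.mul_sum, hP, vdiv]
    congr 1
    · rw [Finset.mul_sum]
      refine Finset.sum_congr rfl fun b _ => ?_
      rw [grad_symm u hu y b k]; ring
    · ring



def iota (n : ℕ) : Eu n →L[ℝ] Eu (n + 1) :=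
  LinearMap.toContinuousLinearMap
    { toFun := fun x => emb x 0
      map_add' := by
        intro x y
        ext j
        refine Fin.lastCases ?_ (fun j => ?_) j <;> simp [emb]
      map_smul' := by
        intro c y
        ext j
        refine Fin.lastCases ?_ (fun j => ?_) j <;> simp [emb] }

lemma iota_apply {n : ℕ} (x : Eu n) : iota n x = emb x 0 := rfl

lemma emb_eq {n : ℕ} (x : Eu n) (t : ℝ) :
    emb x t = iota n x + t • EuclideanSpace.single (Fin.last n) 1 := by
  ext j
  rw [iota_apply]
  refine Fin.lastCases ?_ (fun j => ?_) j
  · simp [emb]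
  · simp [emb]

lemma iota_single {n : ℕ} (j : Fin n) :
    iota n (EuclideanSpace.single j 1) = EuclideanSpace.single j.castSucc 1 := by
  ext i
  rw [iota_apply]
  refine Fin.lastCases ?_ (fun i => ?_) i
  · simp [emb]
  · simp [emb, Pi.single_apply]

lemma emb_hasFDerivAt {n : ℕ} (x : Eu n) (t : ℝ) :
    HasFDerivAt (fun y => emb y t) (iota n) x := by
  simp only [emb_eq]
  exact (iota n).hasFDerivAt.add_const _

lemma emb_hasDerivAt {n : ℕ} (x : Eu n) (t : ℝ) :
    HasDerivAt (fun s => emb x s) (EuclideanSpace.single (Fin.last n) 1) t := by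
  simp only [emb_eq]
  have := ((hasDerivAt_id t).smul_const (EuclideanSpace.single (Fin.last n) (1:ℝ))).const_add (iota n x)
  simpa using this

lemma emb_continuous {n : ℕ} : Continuous (fun q : ℝ × Eu n => emb q.2 q.1) := by
  simp only [emb_eq]
  fun_prop

lemma emb_contDiff {n : ℕ} (t : ℝ) : ContDiff ℝ 1 (fun y : Eu n => emb y t) := by
  simp only [emb_eq]
  fun_prop

lemma fderiv_emb {n : ℕ} (g : Eu (n+1) → ℝ) (x : Eu n) (t : ℝ) (hg : DifferentiableAt ℝ g (emb x t))
    (j : Fin n) : fderiv ℝ (fun y => g (emb y t)) x (EuclideanSpace.single j 1)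
      = fderiv ℝ g (emb x t) (EuclideanSpace.single j.castSucc 1) := by
  have h : HasFDerivAt (fun y => g (emb y t)) ((fderiv ℝ g (emb x t)).comp (iota n)) x :=
    HasFDerivAt.comp x hg.hasFDerivAt (emb_hasFDerivAt x t)
  rw [h.fderiv, ContinuousLinearMap.comp_apply, iota_single]

lemma grad_emb {n : ℕ} (g : Eu (n+1) → ℝ) (x : Eu n) (t : ℝ) (hg : DifferentiableAt ℝ g (emb x t))
    (j : Fin n) : gradient (fun y => g (emb y t)) x j = gradient g (emb x t) j.castSucc := by
  rw [grad_apply, grad_apply, fderiv_emb g x t hg]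

def stressT {n m : ℕ} (p : ℝ) (u : Fin m → Eu (n+1) → ℝ) (b : Fin (n+1)) (y : Eu (n+1)) : ℝ :=
  ∑ i, ‖gradient (u i) y‖ ^ (p - 2) * (gradient (u i) y b * gradient (u i) y (Fin.last n))

def enE {n m : ℕ} (p : ℝ) (Ht : (Fin m → ℝ) → ℝ) (u : Fin m → Eu (n+1) → ℝ) (y : Eu (n+1)) : ℝ :=
  ∑ i, (1 / p) * ‖gradient (u i) y‖ ^ p - stressT p u (Fin.last n) y - Ht (fun j => u j y)

lemma pIntegrand_eq {n m : ℕ} (p : ℝ) (hp : 1 < p) (Ht : (Fin m → ℝ) → ℝ)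
    (u : Fin m → Eu (n+1) → ℝ) (hu : ∀ i, ContDiff ℝ 2 (u i)) (x : Eu n) (t : ℝ) :
    pIntegrand p Ht u x t = enE p Ht u (emb x t) := by
  unfold pIntegrand enE stressT
  rw [← Finset.sum_sub_distrib]
  congr 1
  refine Finset.sum_congr rfl fun i _ => ?_
  have hd : DifferentiableAt ℝ (u i) (emb x t) := (hu i).differentiable two_ne_zero _
  rw [← grad_apply, ← rpow_sq_mul p hp _ (norm_nonneg _)]
  have h1 : ‖gradient (fun y => u i (emb y t)) x‖ ^ 2 =
      ∑ j : Fin n, gradient (u i) (emb x t) j.castSucc ^ 2 := by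
    rw [EuclideanSpace.real_norm_sq_eq]
    exact Finset.sum_congr rfl fun j _ => by rw [grad_emb _ _ _ hd]
  have h2 : ‖gradient (u i) (emb x t)‖ ^ 2 = ∑ j : Fin n, gradient (u i) (emb x t) j.castSucc ^ 2
      + gradient (u i) (emb x t) (Fin.last n) ^ 2 := by
    rw [EuclideanSpace.real_norm_sq_eq, Fin.sum_univ_castSucc]
  rw [h1, h2]
  have : p ≠ 0 := by linarith
  field_simp
  ring

lemma stressT_contDiff {n m : ℕ} (p : ℝ) (hp : 1 < p)
    (u : Fin m → Eu (n+1) → ℝ) (hu : ∀ i, ContDiff ℝ 2 (u i)) (b : Fin (n+1)) :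
    ContDiff ℝ 1 (stressT p u b) := by
  unfold stressT
  refine ContDiff.sum fun i _ => ?_
  exact (Q_contDiff p hp b (Fin.last n)).comp (grad_contDiff (u i) (hu i))

lemma Ht_chain {n m : ℕ} (Ht : (Fin m → ℝ) → ℝ) (hHt : ContDiff ℝ 2 Ht)
    (H : Fin m → (Fin m → ℝ) → ℝ) (hHtgrad : ∀ i y, fderiv ℝ Ht y (Pi.single i 1) = H i y)
    (u : Fin m → Eu (n+1) → ℝ) (hu : ∀ i, ContDiff ℝ 2 (u i)) (y : Eu (n+1)) (v : Eu (n+1)) :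
    ∃ L : Eu (n+1) →L[ℝ] ℝ, HasFDerivAt (fun y => Ht (fun j => u j y)) L y ∧
      L v = ∑ i, H i (fun j => u j y) * fderiv ℝ (u i) y v := by
  have hd : ∀ i, HasFDerivAt (u i) (fderiv ℝ (u i) y) y :=
    fun i => ((hu i).differentiable two_ne_zero _).hasFDerivAt
  have h1 : HasFDerivAt (fun y => fun j => u j y) (ContinuousLinearMap.pi fun i => fderiv ℝ (u i) y) y :=
    hasFDerivAt_pi.2 hd
  have h2 := (hHt.differentiable two_ne_zero (fun j => u j y)).hasFDerivAt
  refine ⟨_, h2.comp y h1, ?_⟩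
  rw [ContinuousLinearMap.comp_apply]
  generalize hz : (ContinuousLinearMap.pi fun i => fderiv ℝ (u i) y) v = z
  have hz' : ∀ i, fderiv ℝ (u i) y v = z i := fun i => by rw [← hz]; rfl
  have : z = ∑ i, z i • (Pi.single i (1:ℝ) : Fin m → ℝ) := by
    ext j; simp [Finset.sum_apply, Pi.single_apply]
  conv_lhs => rw [this]
  rw [map_sum]
  refine Finset.sum_congr rfl fun i _ => ?_
  rw [map_smul, hHtgrad, hz', smul_eq_mul, mul_comm]

lemma enE_hasFDerivAt {n m : ℕ} (p : ℝ) (hp : 1 < p) (Ht : (Fin m → ℝ) → ℝ) (hHt : ContDiff ℝ 2 Ht)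
    (H : Fin m → (Fin m → ℝ) → ℝ) (hHtgrad : ∀ i y, fderiv ℝ Ht y (Pi.single i 1) = H i y)
    (u : Fin m → Eu (n+1) → ℝ) (hu : ∀ i, ContDiff ℝ 2 (u i))
    (hsol : ∀ i x, -vdiv (fun y =>
        ‖gradient (u i) y‖ ^ (p - 2) • gradient (u i) y) x
        = H i (fun j => u j x)) (y : Eu (n+1)) :
    ∃ L : Eu (n+1) →L[ℝ] ℝ, HasFDerivAt (enE p Ht u) L y ∧
      L (EuclideanSpace.single (Fin.last n) 1)
        = ∑ j : Fin n, fderiv ℝ (stressT p u j.castSucc) y (EuclideanSpace.single j.castSucc 1) := by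
  obtain ⟨L, hL, hLv⟩ := Ht_chain Ht hHt H hHtgrad u hu y (EuclideanSpace.single (Fin.last n) 1)
  have hP : ∀ i, DifferentiableAt ℝ (fun y => (1 / p) * ‖gradient (u i) y‖ ^ p) y := fun i =>
    (((hasFDerivAt_norm_rpow (gradient (u i) y) hp).comp y
      ((grad_contDiff _ (hu i)).differentiable one_ne_zero y).hasFDerivAt).const_mul
        (1 / p)).differentiableAt
  have hT := fun b => ((stressT_contDiff p hp u hu b).differentiable one_ne_zero y).hasFDerivAt
  have hS : HasFDerivAt (fun y => ∑ i, (1 / p) * ‖gradient (u i) y‖ ^ p)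
      (∑ i, fderiv ℝ (fun y => (1 / p) * ‖gradient (u i) y‖ ^ p) y) y :=
    HasFDerivAt.fun_sum fun i _ => (hP i).hasFDerivAt
  refine ⟨_, (hS.sub (hT (Fin.last n))).sub hL, ?_⟩
  have hTs : ∀ b, fderiv ℝ (stressT p u b) y = ∑ i, fderiv ℝ (fun y => ‖gradient (u i) y‖ ^ (p - 2) *
      (gradient (u i) y b * gradient (u i) y (Fin.last n))) y := by
    intro b
    refine (HasFDerivAt.fun_sum fun i _ => DifferentiableAt.hasFDerivAt ?_).fderiv
    exact ((Q_contDiff p hp b (Fin.last n)).comp (grad_contDiff (u i) (hu i))).differentiable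
      one_ne_zero y
  have key : ∑ b, fderiv ℝ (stressT p u b) y (EuclideanSpace.single b 1)
      = ∑ i, fderiv ℝ (fun y => (1 / p) * ‖gradient (u i) y‖ ^ p) y
          (EuclideanSpace.single (Fin.last n) 1)
        - ∑ i, H i (fun j => u j y) * fderiv ℝ (u i) y (EuclideanSpace.single (Fin.last n) 1) := by
    simp only [hTs, _root_.sum_apply]
    rw [Finset.sum_comm, ← Finset.sum_sub_distrib]
    refine Finset.sum_congr rfl fun i _ => ?_
    rw [stress p hp (u i) (hu i) (Fin.last n) y, ← hsol i y, grad_apply]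
    ring
  rw [Fin.sum_univ_castSucc] at key
  simp only [_root_.sub_apply, _root_.sum_apply, hLv]
  linarith

lemma pInt_hasDerivAt {n m : ℕ} (p : ℝ) (hp : 1 < p) (Ht : (Fin m → ℝ) → ℝ) (hHt : ContDiff ℝ 2 Ht)
    (H : Fin m → (Fin m → ℝ) → ℝ) (hHtgrad : ∀ i y, fderiv ℝ Ht y (Pi.single i 1) = H i y)
    (u : Fin m → Eu (n+1) → ℝ) (hu : ∀ i, ContDiff ℝ 2 (u i))
    (hsol : ∀ i x, -vdiv (fun y =>
        ‖gradient (u i) y‖ ^ (p - 2) • gradient (u i) y) x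
        = H i (fun j => u j x)) (x : Eu n) (t : ℝ) :
    HasDerivAt (fun s => pIntegrand p Ht u x s)
      (∑ j : Fin n, fderiv ℝ (stressT p u j.castSucc) (emb x t)
        (EuclideanSpace.single j.castSucc 1)) t := by
  obtain ⟨L, hL, hLv⟩ := enE_hasFDerivAt p hp Ht hHt H hHtgrad u hu hsol (emb x t)
  rw [← hLv]
  simp only [pIntegrand_eq p hp Ht u hu]
  exact hL.comp_hasDerivAt t (emb_hasDerivAt x t)


lemma boundary_eq {n m : ℕ} (p : ℝ) (u : Fin m → Eu (n+1) → ℝ) (hu : ∀ i, ContDiff ℝ 2 (u i))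
    (x : Eu n) (s : ℝ) :
    ∑ i, ‖gradient (u i) (emb x s)‖ ^ (p - 2)
              * ⟪gradient (fun y => u i (emb y s)) x, ‖x‖⁻¹ • x⟫
              * fderiv ℝ (u i) (emb x s) (EuclideanSpace.single (Fin.last n) 1)
      = ∑ j : Fin n, stressT p u j.castSucc (emb x s) * (‖x‖⁻¹ • x) j := by
  generalize (‖x‖⁻¹ • x) = z
  simp only [stressT, Finset.sum_mul]
  rw [Finset.sum_comm]
  refine Finset.sum_congr rfl fun i _ => ?_
  have hd : DifferentiableAt ℝ (u i) (emb x s) := (hu i).differentiable two_ne_zero _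
  rw [PiLp.inner_apply, Finset.mul_sum, Finset.sum_mul]
  refine Finset.sum_congr rfl fun j _ => ?_
  rw [grad_emb _ _ _ hd, ← grad_apply, show ∀ a b : ℝ, inner ℝ a b = a * b from fun a b => by simp [mul_comm]]
  ring

lemma cont_int {k : ℕ} (g : ℝ → Eu k → ℝ) (hg : Continuous (fun q : ℝ × Eu k => g q.1 q.2)) (R : ℝ)
    (hR : 0 < R) : Continuous (fun s => ∫ x in ball (0 : Eu k) R, g s x) := by
  have h : ∀ s, ∫ x in ball (0 : Eu k) R, g s x = ∫ x in closedBall (0 : Eu k) R, g s x := by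
    intro s
    refine setIntegral_congr_set ?_
    have hs : (volume : Measure (Eu k)) (sphere 0 R) = 0 := Measure.addHaar_sphere_of_ne_zero _ _ hR.ne'
    rw [← ball_union_sphere]
    exact (union_ae_eq_left_of_ae_eq_empty (ae_eq_empty.2 hs)).symm
  simp only [h]
  exact continuous_parametric_integral_of_continuous hg (isCompact_closedBall _ _)


/-- **Hamiltonian identity for the p-Laplacian system**
`-div(|∇uᵢ|^{p-2}∇uᵢ) = Hᵢ(u)` on `ℝ^{n+1}`: under the stated integrability,
differentiation-under-the-integral and vanishing-boundary-term assumptions,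
`∫_{ℝⁿ} ( ∑ᵢ |∇uᵢ|^{p-2}[ (1/p)|∇_{x'}uᵢ|² - ((p-1)/p)|∂_{x_n}uᵢ|² ] - H̃(u) ) dx'`
is independent of `x_n`. -/
theorem hamiltonian_identity_pLaplacian
    (n m : ℕ) (hm : 1 ≤ m) (p : ℝ) (hp : 1 < p)
    (H : Fin m → (Fin m → ℝ) → ℝ) (hH : ∀ i, ContDiff ℝ 1 (H i))
    (Ht : (Fin m → ℝ) → ℝ) (hHt : ContDiff ℝ 2 Ht)
    (hHtgrad : ∀ i y, fderiv ℝ Ht y (Pi.single i 1) = H i y)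
    (u : Fin m → EuclideanSpace ℝ (Fin (n + 1)) → ℝ)
    (hu : ∀ i, ContDiff ℝ 2 (u i))
    (hsol : ∀ i x, -vdiv (fun y =>
        ‖gradient (u i) y‖ ^ (p - 2) • gradient (u i) y) x
        = H i (fun j => u j x))
    -- (i) integrability of the integrand on every horizontal slice
    (hint : ∀ t : ℝ, Integrable (fun x' : EuclideanSpace ℝ (Fin n) => pIntegrand p Ht u x' t))
    -- (ii) differentiation under the integral sign is justified on every ball
    (hdiff : ∀ R : ℝ, 0 < R → ∀ t : ℝ,
      HasDerivAt (fun s : ℝ => ∫ x' in ball (0 : EuclideanSpace ℝ (Fin n)) R,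
          pIntegrand p Ht u x' s)
        (∫ x' in ball (0 : EuclideanSpace ℝ (Fin n)) R,
          deriv (fun s : ℝ => pIntegrand p Ht u x' s) t) t)
    -- (iii) the boundary terms vanish along a sequence of radii tending to infinity
    (hbdry : ∀ t : ℝ, ∃ R : ℕ → ℝ, Tendsto R atTop atTop ∧
      Tendsto (fun k => ∫ s in (0 : ℝ)..t,
          ∫ x' in sphere (0 : EuclideanSpace ℝ (Fin n)) (R k),
            ∑ i, ‖gradient (u i) (emb x' s)‖ ^ (p - 2)
              * ⟪gradient (fun y => u i (emb y s)) x', ‖x'‖⁻¹ • x'⟫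
              * fderiv ℝ (u i) (emb x' s) (EuclideanSpace.single (Fin.last n) 1)
            ∂μH[(n : ℝ) - 1]) atTop (nhds 0)) :
    ∀ t : ℝ, (∫ x' : EuclideanSpace ℝ (Fin n), pIntegrand p Ht u x' t)
      = ∫ x' : EuclideanSpace ℝ (Fin n), pIntegrand p Ht u x' 0 := by
  intro t
  have hder := pInt_hasDerivAt p hp Ht hHt H hHtgrad u hu hsol
  rcases n with _ | k
  · refine integral_congr_ae (.of_forall fun x => ?_)
    refine is_const_of_deriv_eq_zero (f := fun s => pIntegrand p Ht u x s)
      (fun s => (hder x s).differentiableAt) (fun s => ?_) t 0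
    rw [(hder x s).deriv]; simp
  obtain ⟨c, hc⟩ := divergence_haus k
  have hTc := stressT_contDiff p hp u hu
  obtain ⟨R, hR, hlim⟩ := hbdry t
  have hcast : ((k + 1 : ℕ) : ℝ) - 1 = k := by push_cast; ring
  simp only [boundary_eq p u hu, hcast] at hlim
  have hdv : ∀ r, 0 < r → ∀ s, ∫ x' in ball (0 : Eu (k+1)) r,
      deriv (fun s : ℝ => pIntegrand p Ht u x' s) s =
      c * ∫ x in sphere (0 : Eu (k+1)) r, ∑ j : Fin (k+1),
        stressT p u j.castSucc (emb x s) * (‖x‖⁻¹ • x) j ∂μH[(k:ℝ)] := by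
    intro r hr s
    rw [← hc (fun j x => stressT p u j.castSucc (emb x s))
      (fun j => (hTc _).comp (emb_contDiff s)) r hr]
    refine integral_congr_ae (.of_forall fun x => ?_)
    beta_reduce
    rw [(hder x s).deriv]
    exact Finset.sum_congr rfl fun j _ =>
      (fderiv_emb _ x s ((hTc _).differentiable one_ne_zero _) j).symm
  have hcont : ∀ r, 0 < r → Continuous (fun s => ∫ x' in ball (0 : Eu (k+1)) r,
      deriv (fun s : ℝ => pIntegrand p Ht u x' s) s) := by
    intro r hr
    refine cont_int (fun s x => deriv (fun s : ℝ => pIntegrand p Ht u x s) s) ?_ r hr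
    simp only [fun x s => (hder x s).deriv]
    refine continuous_finsetSum _ fun j _ => ?_
    exact (((hTc j.castSucc).continuous_fderiv one_ne_zero).comp emb_continuous).clm_apply
      continuous_const
  have hFTC : ∀ r, 0 < r → (∫ x' in ball (0 : Eu (k+1)) r, pIntegrand p Ht u x' t)
      - (∫ x' in ball (0 : Eu (k+1)) r, pIntegrand p Ht u x' 0)
      = c * ∫ s in (0:ℝ)..t, ∫ x in sphere (0 : Eu (k+1)) r, ∑ j : Fin (k+1),
        stressT p u j.castSucc (emb x s) * (‖x‖⁻¹ • x) j ∂μH[(k:ℝ)] := by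
    intro r hr
    rw [← intervalIntegral.integral_const_mul]
    simp only [← hdv r hr]
    exact (intervalIntegral.integral_eq_sub_of_hasDerivAt (fun s _ => hdiff r hr s)
      ((hcont r hr).intervalIntegrable _ _)).symm
  have hL : ∀ s, Tendsto (fun i => ∫ x' in ball (0 : Eu (k+1)) (R i), pIntegrand p Ht u x' s) atTop
      (nhds (∫ x', pIntegrand p Ht u x' s)) := fun s =>
    (aecover_ball hR).integral_tendsto_of_countably_generated (hint s)
  have h1 := (hL t).sub (hL 0)
  have h2 := hlim.const_mul c
  rw [mul_zero] at h2
  have h3 := h2.congr' (f₂ := fun i => (∫ x' in ball (0 : Eu (k+1)) (R i), pIntegrand p Ht u x' t)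
      - (∫ x' in ball (0 : Eu (k+1)) (R i), pIntegrand p Ht u x' 0)) (by
    filter_upwards [hR.eventually_gt_atTop 0] with i hi
    exact (hFTC _ hi).symm)
  exact sub_eq_zero.1 (tendsto_nhds_unique h1 h3)
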